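/- Let C be a finite category, c an object, and let J be a J-class of the consolidation monoid C^cd such that J ∩ C_c is nonempty. Then J ∩ C_c is a single J-class of the monoid C_c = C(c,c). -/

import Mathlib

/-- A finite category presented by its set of arrows with a partial composition. -/
structure FinCat (Obj : Type) where
  Arr : Type
  src : Arr → Obj
  tgt : Arr → Obj
  id : Obj → Arr
  comp : (f g : Arr) → tgt f = src g → Arr
  src_id : ∀ a, src (id a) = a
  tgt_id : ∀ a, tgt (id a) = a
  src_comp : ∀ f g h, src (comp f g h) = src f
  tgt_comp : ∀ f g h, tgt (comp f g h) = tgt g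
  id_comp : ∀ (f : Arr) (h : tgt (id (src f)) = src f), comp (id (src f)) f h = f
  comp_id : ∀ (f : Arr) (h : tgt f = src (id (tgt f))), comp f (id (tgt f)) h = f
  assoc : ∀ (f g k : Arr) (h1 : tgt f = src g) (h2 : tgt g = src k) h3 h4,
    comp (comp f g h1) k h3 = comp f (comp g k h2) h4

/-- The underlying set of the consolidation monoid `C^cd`:
arrows of `C` together with an adjoined zero and identity. -/
inductive Cd {Obj : Type} (C : FinCat Obj) where
  | zero : Cd C
  | one : Cd C
  | arr : C.Arr → Cd C

variable {Obj : Type} [DecidableEq Obj]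

/-- Multiplication of the consolidation: composition where defined, `0` otherwise,
with `1` an adjoined identity and `0` absorbing. -/
def cdMul (C : FinCat Obj) : Cd C → Cd C → Cd C
  | .one, x => x
  | .zero, _ => .zero
  | x, .one => x
  | _, .zero => .zero
  | .arr f, .arr g => if h : C.tgt f = C.src g then .arr (C.comp f g h) else .zero

theorem cdMul_zero (C : FinCat Obj) (x : Cd C) : cdMul C x Cd.zero = Cd.zero := by
  cases x <;> rfl
theorem cdZero_mul (C : FinCat Obj) (x : Cd C) : cdMul C Cd.zero x = Cd.zero := by
  cases x <;> rfl
theorem cdMul_one (C : FinCat Obj) (x : Cd C) : cdMul C x Cd.one = x := by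
  cases x <;> rfl
theorem cdOne_mul (C : FinCat Obj) (x : Cd C) : cdMul C Cd.one x = x := by
  cases x <;> rfl

theorem cdMul_assoc (C : FinCat Obj) (x y z : Cd C) :
    cdMul C (cdMul C x y) z = cdMul C x (cdMul C y z) := by
  cases x <;> cases y <;> cases z <;>
    (try simp only [cdMul_zero, cdZero_mul, cdMul_one, cdOne_mul]) <;> (try rfl)
  case arr.arr.arr f g k =>
    by_cases h1 : C.tgt f = C.src g
    · by_cases h2 : C.tgt g = C.src k
      · show cdMul C (dite _ _ _) _ = cdMul C _ (dite _ _ _)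
        rw [dif_pos h1, dif_pos h2]
        show dite _ _ _ = dite _ _ _
        rw [dif_pos (show C.tgt (C.comp f g h1) = C.src k by rw [C.tgt_comp]; exact h2),
            dif_pos (show C.tgt f = C.src (C.comp g k h2) by rw [C.src_comp]; exact h1)]
        exact congrArg Cd.arr (C.assoc f g k h1 h2 _ _)
      · show cdMul C (dite _ _ _) _ = cdMul C _ (dite _ _ _)
        rw [dif_pos h1, dif_neg h2]
        show dite _ _ _ = Cd.zero
        rw [dif_neg (show ¬ C.tgt (C.comp f g h1) = C.src k by rw [C.tgt_comp]; exact h2)]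
    · show cdMul C (dite _ _ _) _ = cdMul C _ (cdMul C _ _)
      rw [dif_neg h1]
      by_cases h2 : C.tgt g = C.src k
      · show Cd.zero = cdMul C _ (dite _ _ _)
        rw [dif_pos h2]
        show Cd.zero = dite _ _ _
        rw [dif_neg (show ¬ C.tgt f = C.src (C.comp g k h2) by rw [C.src_comp]; exact h1)]
      · show Cd.zero = cdMul C _ (dite _ _ _)
        rw [dif_neg h2, cdMul_zero]

instance cdMonoid (C : FinCat Obj) : Monoid (Cd C) where
  mul := cdMul C
  one := .one
  one_mul x := by cases x <;> rfl
  mul_one x := by cases x <;> rfl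
  mul_assoc := cdMul_assoc C

/-- Green's R-equivalence in a monoid. -/
def RE {M : Type} [Monoid M] (s t : M) : Prop := (∃ a, s * a = t) ∧ (∃ a, t * a = s)
/-- Green's L-equivalence in a monoid. -/
def LE' {M : Type} [Monoid M] (s t : M) : Prop := (∃ a, a * s = t) ∧ (∃ a, a * t = s)
/-- Green's H-equivalence in a monoid. -/
def HE {M : Type} [Monoid M] (s t : M) : Prop := RE s t ∧ LE' s t
/-- Green's J-equivalence in a monoid. -/
def JE {M : Type} [Monoid M] (s t : M) : Prop :=
  (∃ a b, a * s * b = t) ∧ (∃ a b, a * t * b = s)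

/-- Green's R-equivalence relative to a subset `S` (multipliers taken in `S`). -/
def REOn {M : Type} [Monoid M] (S : Set M) (s t : M) : Prop :=
  (∃ a ∈ S, s * a = t) ∧ (∃ a ∈ S, t * a = s)
def LEOn {M : Type} [Monoid M] (S : Set M) (s t : M) : Prop :=
  (∃ a ∈ S, a * s = t) ∧ (∃ a ∈ S, a * t = s)
def HEOn {M : Type} [Monoid M] (S : Set M) (s t : M) : Prop := REOn S s t ∧ LEOn S s t
def JEOn {M : Type} [Monoid M] (S : Set M) (s t : M) : Prop :=
  (∃ a ∈ S, ∃ b ∈ S, a * s * b = t) ∧ (∃ a ∈ S, ∃ b ∈ S, a * t * b = s)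

/-- The local monoid `C_c = C(c,c)`, viewed as a subset of the consolidation. -/
def locSet (C : FinCat Obj) (c : Obj) : Set (Cd C) :=
  {x | ∃ f : C.Arr, x = Cd.arr f ∧ C.src f = c ∧ C.tgt f = c}

theorem cd_mul_eq_arr_left {C : FinCat Obj} {a : Cd C} {f g : C.Arr}
    (h : a * Cd.arr f = Cd.arr g) :
    C.tgt g = C.tgt f ∧ ∃ e : C.Arr, C.src e = C.src g ∧ C.tgt e = C.src f ∧
      Cd.arr e * Cd.arr f = Cd.arr g := by
  change cdMul C a (Cd.arr f) = Cd.arr g at h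
  cases a with
  | zero => simp [cdMul] at h
  | one =>
    obtain rfl : f = g := by simpa [cdMul] using h
    refine ⟨rfl, C.id (C.src f), C.src_id _, C.tgt_id _, ?_⟩
    change cdMul C _ _ = _
    simp only [cdMul, dif_pos (C.tgt_id (C.src f)), C.id_comp]
  | arr e =>
    by_cases he : C.tgt e = C.src f
    · have hg : C.comp e f he = g := by simpa [cdMul, he] using h
      exact ⟨by rw [← hg, C.tgt_comp], e, by rw [← hg, C.src_comp], he, h⟩
    · simp [cdMul, he] at h

theorem cd_mul_eq_arr_right {C : FinCat Obj} {b : Cd C} {f g : C.Arr}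
    (h : Cd.arr f * b = Cd.arr g) :
    C.src g = C.src f ∧ ∃ e : C.Arr, C.src e = C.tgt f ∧ C.tgt e = C.tgt g ∧
      Cd.arr f * Cd.arr e = Cd.arr g := by
  change cdMul C (Cd.arr f) b = Cd.arr g at h
  cases b with
  | zero => simp [cdMul] at h
  | one =>
    obtain rfl : f = g := by simpa [cdMul] using h
    refine ⟨rfl, C.id (C.tgt f), C.src_id _, C.tgt_id _, ?_⟩
    change cdMul C _ _ = _
    simp only [cdMul, dif_pos (C.src_id (C.tgt f)).symm, C.comp_id]
  | arr e =>
    by_cases he : C.tgt f = C.src e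
    · have hg : C.comp f e he = g := by simpa [cdMul, he] using h
      exact ⟨by rw [← hg, C.src_comp], e, he.symm, by rw [← hg, C.tgt_comp], h⟩
    · simp [cdMul, he] at h

theorem exists_arr_of_mul_arr_mul_eq_arr {C : FinCat Obj} {a b : Cd C} {f g : C.Arr}
    (h : a * Cd.arr f * b = Cd.arr g) : ∃ k : C.Arr, a * Cd.arr f = Cd.arr k := by
  change cdMul C (cdMul C a (Cd.arr f)) b = Cd.arr g at h
  change ∃ k, cdMul C a (Cd.arr f) = Cd.arr k
  cases a with
  | zero => simp [cdZero_mul] at h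
  | one => exact ⟨f, rfl⟩
  | arr e =>
    by_cases he : C.tgt e = C.src f
    · exact ⟨C.comp e f he, by simp [cdMul, he]⟩
    · simp [cdMul, he] at h

/-- Multipliers between two elements of a local monoid can be taken in that local monoid. -/
theorem exists_mem_locSet_mul_mul_eq {C : FinCat Obj} {c : Obj} {s t : Cd C}
    (hs : s ∈ locSet C c) (ht : t ∈ locSet C c) (h : ∃ a b, a * s * b = t) :
    ∃ a ∈ locSet C c, ∃ b ∈ locSet C c, a * s * b = t := by
  obtain ⟨f, rfl, hf, hf'⟩ := hs
  obtain ⟨g, rfl, hg, hg'⟩ := ht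
  obtain ⟨a, b, h⟩ := h
  obtain ⟨k, hk⟩ := exists_arr_of_mul_arr_mul_eq_arr h
  rw [hk] at h
  obtain ⟨hkt, a', ha, ha', hak⟩ := cd_mul_eq_arr_left hk
  obtain ⟨hks, b', hb, hb', hbk⟩ := cd_mul_eq_arr_right h
  exact ⟨Cd.arr a', ⟨a', rfl, by rw [ha, ← hks, hg], by rw [ha', hf]⟩,
    Cd.arr b', ⟨b', rfl, by rw [hb, hkt, hf'], by rw [hb', hg']⟩, by rw [hak, hbk]⟩

theorem JE.symm {M : Type} [Monoid M] {s t : M} (h : JE s t) : JE t s := ⟨h.2, h.1⟩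

theorem JE.trans {M : Type} [Monoid M] {s t u : M} (h : JE s t) (h' : JE t u) : JE s u := by
  obtain ⟨⟨a, b, rfl⟩, a', b', h₁⟩ := h
  obtain ⟨⟨p, q, rfl⟩, p', q', h₂⟩ := h'
  refine ⟨⟨p * a, b * q, by simp only [mul_assoc]⟩, a' * p', q' * b', ?_⟩
  calc a' * p' * (p * (a * s * b) * q) * (q' * b')
      = a' * (p' * (p * (a * s * b) * q) * q') * b' := by simp only [mul_assoc]
    _ = s := by rw [h₂, h₁]

theorem JEOn.je {M : Type} [Monoid M] {S : Set M} {s t : M} (h : JEOn S s t) : JE s t := by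
  obtain ⟨⟨a, -, b, -, h₁⟩, a', -, b', -, h₂⟩ := h
  exact ⟨⟨a, b, h₁⟩, a', b', h₂⟩

/-- if `J` is a J-class of `C^cd` meeting the local monoid `C_c`,
then `J ∩ C_c` is a single J-class of the monoid `C_c`. -/
theorem stmt_9 (C : FinCat Obj) [Fintype Obj] [Fintype C.Arr] (c : Obj)
    (J : Set (Cd C)) (hJ : ∃ w : Cd C, J = {z | JE z w})
    (x : Cd C) (hx : x ∈ J ∩ locSet C c) :
    J ∩ locSet C c = {z ∈ locSet C c | JEOn (locSet C c) z x} := by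
  obtain ⟨w, rfl⟩ := hJ
  obtain ⟨hxw : JE x w, hxc⟩ := hx
  ext z
  constructor
  · rintro ⟨hzw : JE z w, hzc⟩
    have hzx := hzw.trans hxw.symm
    exact ⟨hzc, exists_mem_locSet_mul_mul_eq hzc hxc hzx.1,
      exists_mem_locSet_mul_mul_eq hxc hzc hzx.2⟩
  · rintro ⟨hzc, hzx⟩
    exact ⟨hzx.je.trans hxw, hzc⟩
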